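/- arXiv:2407.18863 — 2 statements merged into one kernel-verified Lean document; each statement's English description precedes it below -/
import Mathlib

section
/- Let X be a proper geodesic metric space with basepoint x₀ which is Morse-dichotomous, i.e. there is a function c assigning to each Morse gauge M a constant c(M) ≥ 0 such that every M-Morse geodesic in X is c(M)-contracting. Then the Morse boundary of X is strongly σ-compact: there exists a sequence (M_n)_{n∈ℕ} of Morse gauges such that every Morse geodesic ray based at x₀ is M_n-Morse for some n, and for every Morse gauge M there exists n = n(M) such that every M-Morse geodesic ray based at x₀ is M_n-Morse. -/
open Metric Set Filter

namespace MorseLTG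

/-- A Morse gauge: a non-decreasing continuous function `[1, ∞) → [0, ∞)`. -/
def IsMorseGauge (M : ℝ → ℝ) : Prop :=
  MonotoneOn M (Set.Ici 1) ∧ ContinuousOn M (Set.Ici 1) ∧ ∀ t : ℝ, 1 ≤ t → 0 ≤ M t

section Space

variable {X : Type*} [MetricSpace X]

/-- `γ` is a `Q`-quasi-geodesic on the set `I ⊆ ℝ`. -/
def QGeoOn (Q : ℝ) (I : Set ℝ) (γ : ℝ → X) : Prop :=
  ContinuousOn γ I ∧ ∀ s ∈ I, ∀ t ∈ I,
    |t - s| / Q - Q ≤ dist (γ s) (γ t) ∧ dist (γ s) (γ t) ≤ Q * |t - s| + Q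

/-- `γ` is `M`-Morse on `I`: every `Q`-quasi-geodesic with endpoints on `γ|_I`
stays in the closed `M Q`-neighbourhood of the corresponding subsegment of `γ`. -/
def MorseOn (M : ℝ → ℝ) (I : Set ℝ) (γ : ℝ → X) : Prop :=
  ∀ Q : ℝ, 1 ≤ Q → ∀ s ∈ I, ∀ t ∈ I, s ≤ t →
    ∀ (lam : ℝ → X) (a b : ℝ), a ≤ b → QGeoOn Q (Set.Icc a b) lam →
      lam a = γ s → lam b = γ t →
      ∀ u ∈ Set.Icc a b, ∃ v ∈ Set.Icc s t, dist (lam u) (γ v) ≤ M Q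

/-- `γ` is a geodesic on `I` (an isometric embedding). -/
def GeodesicOn (I : Set ℝ) (γ : ℝ → X) : Prop :=
  ∀ s ∈ I, ∀ t ∈ I, dist (γ s) (γ t) = |t - s|

/-- A geodesic ray based at `x₀`. -/
def GeodesicRayFrom (x₀ : X) (γ : ℝ → X) : Prop :=
  γ 0 = x₀ ∧ GeodesicOn (Set.Ici 0) γ

/-- A Morse geodesic ray (based anywhere). -/
def IsMorseGeodesicRay (γ : ℝ → X) : Prop :=
  GeodesicOn (Set.Ici 0) γ ∧ ∃ M : ℝ → ℝ, IsMorseGauge M ∧ MorseOn M (Set.Ici 0) γ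

/-- `p` is `L`-locally an `M`-Morse `Q`-quasi-geodesic on `I`. -/
def LocMorseQGeoOn (Q : ℝ) (M : ℝ → ℝ) (L : ℝ) (I : Set ℝ) (p : ℝ → X) : Prop :=
  ∀ s ∈ I, ∀ t ∈ I, s ≤ t → t - s ≤ L →
    QGeoOn Q (Set.Icc s t) p ∧ MorseOn M (Set.Icc s t) p

/-- `p` is `L`-locally `M`-Morse on `I`. -/
def LocMorseOn (M : ℝ → ℝ) (L : ℝ) (I : Set ℝ) (p : ℝ → X) : Prop :=
  ∀ s ∈ I, ∀ t ∈ I, s ≤ t → t - s ≤ L → MorseOn M (Set.Icc s t) p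

/-- The Morse local-to-global property for a geodesic metric space. -/
def MLTG (X : Type*) [MetricSpace X] : Prop :=
  ∀ Q : ℝ, 1 ≤ Q → ∀ M : ℝ → ℝ, IsMorseGauge M →
    ∃ (L Q' : ℝ) (M' : ℝ → ℝ), 0 < L ∧ 1 ≤ Q' ∧ IsMorseGauge M' ∧
      ∀ I : Set ℝ, I.OrdConnected → ∀ p : ℝ → X,
        LocMorseQGeoOn Q M L I p → QGeoOn Q' I p ∧ MorseOn M' I p

/-- `X` is a geodesic metric space. -/
def GeodesicSpace (X : Type*) [MetricSpace X] : Prop :=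
  ∀ x y : X, ∃ γ : ℝ → X, γ 0 = x ∧ γ (dist x y) = y ∧
    GeodesicOn (Set.Icc 0 (dist x y)) γ

/-- Gromov hyperbolicity via thin geodesic triangles. -/
def GromovHyperbolic (X : Type*) [MetricSpace X] : Prop :=
  ∃ δ : ℝ, 0 ≤ δ ∧
    ∀ (γ₁ γ₂ γ₃ : ℝ → X) (a₁ b₁ a₂ b₂ a₃ b₃ : ℝ),
      GeodesicOn (Set.Icc a₁ b₁) γ₁ → GeodesicOn (Set.Icc a₂ b₂) γ₂ →
        GeodesicOn (Set.Icc a₃ b₃) γ₃ →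
      γ₁ b₁ = γ₂ a₂ → γ₂ b₂ = γ₃ a₃ → γ₃ b₃ = γ₁ a₁ →
      ∀ s ∈ Set.Icc a₁ b₁,
        ∃ p ∈ γ₂ '' Set.Icc a₂ b₂ ∪ γ₃ '' Set.Icc a₃ b₃, dist (γ₁ s) p ≤ δ

/-- The set of closest-point projections of `x` to `A`. -/
def projSet (A : Set X) (x : X) : Set X :=
  {y ∈ A | ∀ z ∈ A, dist x y ≤ dist x z}

/-- A subset `A` is `C`-contracting. -/
def ContractingSet (C : ℝ) (A : Set X) : Prop :=
  ∀ x : X, Metric.diam (⋃ y ∈ Metric.ball x (Metric.infDist x A), projSet A y) ≤ C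

/-- `γ` is a `C`-contracting geodesic on `I`. -/
def ContractingOn (C : ℝ) (I : Set ℝ) (γ : ℝ → X) : Prop :=
  GeodesicOn I γ ∧ ContractingSet C (γ '' I)

/-- The Morse boundary of `X` (with basepoint `x₀`) is σ-compact. -/
def SigmaCompactMorseBoundary (x₀ : X) : Prop :=
  ∃ Ms : ℕ → ℝ → ℝ, (∀ n, IsMorseGauge (Ms n)) ∧
    ∀ γ : ℝ → X, GeodesicRayFrom x₀ γ → ∀ M : ℝ → ℝ, IsMorseGauge M →
      MorseOn M (Set.Ici 0) γ → ∃ n, MorseOn (Ms n) (Set.Ici 0) γ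

/-- `Ms` is a strong exhaustion of the Morse boundary of `X` based at `x₀`. -/
def IsStrongExhaustion (x₀ : X) (Ms : ℕ → ℝ → ℝ) : Prop :=
  (∀ n, IsMorseGauge (Ms n)) ∧
  (∀ γ : ℝ → X, GeodesicRayFrom x₀ γ → ∀ M : ℝ → ℝ, IsMorseGauge M →
    MorseOn M (Set.Ici 0) γ → ∃ n, MorseOn (Ms n) (Set.Ici 0) γ) ∧
  (∀ M : ℝ → ℝ, IsMorseGauge M → ∃ n, ∀ γ : ℝ → X, GeodesicRayFrom x₀ γ →
    MorseOn M (Set.Ici 0) γ → MorseOn (Ms n) (Set.Ici 0) γ)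

/-- The Morse boundary of `X` (with basepoint `x₀`) is strongly σ-compact. -/
def StronglySigmaCompactMorseBoundary (x₀ : X) : Prop :=
  ∃ Ms : ℕ → ℝ → ℝ, IsStrongExhaustion x₀ Ms

end Space

section Action

variable {G : Type*} [Group G] {X : Type*} [MetricSpace X]

/-- `φ` is an action of `G` on `X` by isometries. -/
def IsIsometricAction (φ : G → X → X) : Prop :=
  (∀ x : X, φ 1 x = x) ∧ (∀ g h : G, ∀ x : X, φ (g * h) x = φ g (φ h x)) ∧
    ∀ g : G, Isometry (φ g)

/-- `φ` is a geometric (proper and cocompact, isometric) action of `G` on `X`. -/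
def IsGeometricAction (φ : G → X → X) : Prop :=
  IsIsometricAction φ ∧
  (∀ (x : X) (r : ℝ), {g : G | dist x (φ g x) ≤ r}.Finite) ∧
  (∃ (x₀ : X) (r : ℝ), ∀ y : X, ∃ g : G, dist y (φ g x₀) ≤ r)

end Action

/-- `G` has contraction: it acts geometrically on some geodesic metric space
containing a strongly contracting geodesic ray. -/
def HasContraction (G : Type*) [Group G] : Prop :=
  ∃ (X : Type) (m : MetricSpace X), ∃ φ : G → X → X,
    letI := m
    IsGeometricAction φ ∧ GeodesicSpace X ∧
      ∃ (γ : ℝ → X) (C : ℝ), 0 ≤ C ∧ GeodesicOn (Set.Ici 0) γ ∧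
        ContractingSet C (γ '' Set.Ici 0)

section Horo

variable {X : Type*} [MetricSpace X]

/-- The horofunction associated to a geodesic ray `γ` based at `x₀`
(for geodesic rays, the infimum below equals the limit of
`t ↦ d(z, γ t) - d(x₀, γ t)` as `t → ∞`, since this function is non-increasing
and bounded below). -/
noncomputable def horofn (x₀ : X) (γ : ℝ → X) (z : X) : ℝ :=
  sInf ((fun t => dist z (γ t) - dist x₀ (γ t)) '' Set.Ici 0)

/-- The horofunction map `y ↦ ρ_y = d(·, y) - d(x₀, y)`. -/
noncomputable def horomap (x₀ y : X) : ContinuousMap X ℝ :=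
  ⟨fun z => dist z y - dist x₀ y, by fun_prop⟩

end Horo

section HoroAction

variable {G : Type*} [Group G] {X : Type*} [MetricSpace X]

/-- The `G`-action on the horofunction compactification:
`(g · f)(z) = f (g⁻¹ z) - f (g⁻¹ x₀)`. -/
noncomputable def horoAction (φ : G → X → X) (hc : ∀ g : G, Continuous (φ g)) (x₀ : X)
    (g : G) (f : ContinuousMap X ℝ) : ContinuousMap X ℝ :=
  ⟨fun z => f (φ g⁻¹ z) - f (φ g⁻¹ x₀), (f.continuous.comp (hc g⁻¹)).sub continuous_const⟩

end HoroAction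

section Words

variable {S : Type*}

/-- A word over the symmetrised alphabet `S ∪ S⁻¹`. -/
abbrev Word (S : Type*) := List (S × Bool)

/-- The formal inverse of a word. -/
def wordInv (w : Word S) : Word S := (w.map fun a => (a.1, !a.2)).reverse

/-- A word is reduced if it has no adjacent cancelling pair. -/
def ReducedWord (w : Word S) : Prop := w.Chain' fun a b => a.1 = b.1 → a.2 = b.2

/-- A word is cyclically reduced if all its cyclic shifts are reduced. -/
def CyclicallyReduced (w : Word S) : Prop := ∀ k : ℕ, ReducedWord (w.rotate k)

/-- The closure of `R ∪ R⁻¹` under cyclic shifts. -/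
def symmClosure (R : Set (Word S)) : Set (Word S) :=
  {w | ∃ r ∈ R, ∃ k : ℕ, w = r.rotate k ∨ w = (wordInv r).rotate k}

/-- A piece: a (non-trivial) common prefix of two distinct elements of `R̄`. -/
def IsPiece (R : Set (Word S)) (p : Word S) : Prop :=
  p ≠ [] ∧ ∃ r₁ ∈ symmClosure R, ∃ r₂ ∈ symmClosure R, r₁ ≠ r₂ ∧ p <+: r₁ ∧ p <+: r₂

/-- The `C'(lam)` small-cancellation condition. -/
def SmallCancellation (R : Set (Word S)) (lam : ℝ) : Prop :=
  (∀ r ∈ R, CyclicallyReduced r) ∧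
  ∀ r ∈ symmClosure R, ∀ p : Word S, IsPiece R p → p <:+: r →
    (p.length : ℝ) < lam * r.length

/-- A viable function. -/
def Viable (f : ℕ → ℝ) : Prop :=
  Monotone f ∧ (∀ n, 6 ≤ f n) ∧ Filter.Tendsto f Filter.atTop Filter.atTop

/-- The pair `(x, R)` satisfies the `C'(1/f)` small-cancellation condition. -/
def PairSmallCancellation (f : ℕ → ℝ) (x : Word S) (R : Set (Word S)) : Prop :=
  ∀ r ∈ symmClosure R, ∀ p : Word S, p ≠ [] → p <:+: x → p <:+: r →
    (p.length : ℝ) < (r.length : ℝ) / f r.length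

/-- The increasing partial small-cancellation condition. -/
def IPSC (R : Set (Word S)) : Prop :=
  ∀ ns : ℕ → ℕ, (∀ i, 0 < ns i) →
    ∃ f : ℕ → ℝ, Viable f ∧
      ∀ K : ℕ, ∃ i : ℕ, K ≤ i ∧ ∃ r ∈ symmClosure R, ∃ x y : Word S,
        r = x ++ y ∧ (ns i : ℝ) ≤ r.length ∧ (r.length : ℝ) / i ≤ x.length ∧
        PairSmallCancellation f x R

end Words

section Cayley

variable {G : Type*} [Group G] {S : Type*}

/-- The element of `G` spelled by a word over `S ∪ S⁻¹`. -/
def evalWord (σ : S → G) (w : Word S) : G :=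
  (w.map fun a => if a.2 then σ a.1 else (σ a.1)⁻¹).prod

/-- The word metric on `G` with respect to the generating map `σ`. -/
noncomputable def wordDist (σ : S → G) (g h : G) : ℕ :=
  sInf {n : ℕ | ∃ w : Word S, w.length = n ∧ g * evalWord σ w = h}

/-- A (discrete) edge path in the Cayley graph: consecutive points are adjacent. -/
def DIsPath (σ : S → G) (I : Set ℤ) (p : ℤ → G) : Prop :=
  ∀ n : ℤ, n ∈ I → n + 1 ∈ I → wordDist σ (p n) (p (n + 1)) ≤ 1

/-- A discrete `Q`-quasi-geodesic in the Cayley graph. -/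
def DQGeoOn (σ : S → G) (Q : ℝ) (I : Set ℤ) (p : ℤ → G) : Prop :=
  DIsPath σ I p ∧ ∀ m ∈ I, ∀ n ∈ I,
    |(n : ℝ) - (m : ℝ)| / Q - Q ≤ (wordDist σ (p m) (p n) : ℝ) ∧
      (wordDist σ (p m) (p n) : ℝ) ≤ Q * |(n : ℝ) - (m : ℝ)| + Q

/-- A discrete geodesic in the Cayley graph. -/
def DGeodesicOn (σ : S → G) (I : Set ℤ) (p : ℤ → G) : Prop :=
  ∀ m ∈ I, ∀ n ∈ I, (wordDist σ (p m) (p n) : ℤ) = |n - m|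

/-- `p` is `M`-Morse on `I` in the Cayley graph. -/
def DMorseOn (σ : S → G) (M : ℝ → ℝ) (I : Set ℤ) (p : ℤ → G) : Prop :=
  ∀ Q : ℝ, 1 ≤ Q → ∀ s ∈ I, ∀ t ∈ I, s ≤ t →
    ∀ (q : ℤ → G) (a b : ℤ), a ≤ b → DQGeoOn σ Q (Set.Icc a b) q →
      q a = p s → q b = p t →
      ∀ n ∈ Set.Icc a b, ∃ m ∈ Set.Icc s t, (wordDist σ (q n) (p m) : ℝ) ≤ M Q

/-- A geodesic ray in the Cayley graph based at the identity. -/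
def DGeodesicRay (σ : S → G) (p : ℤ → G) : Prop :=
  p 0 = 1 ∧ DGeodesicOn σ (Set.Ici 0) p

/-- `p` is `L`-locally an `M`-Morse `Q`-quasi-geodesic. -/
def DLocMorseQGeoOn (σ : S → G) (Q : ℝ) (M : ℝ → ℝ) (L : ℝ) (I : Set ℤ) (p : ℤ → G) : Prop :=
  ∀ s ∈ I, ∀ t ∈ I, s ≤ t → ((t - s : ℤ) : ℝ) ≤ L →
    DQGeoOn σ Q (Set.Icc s t) p ∧ DMorseOn σ M (Set.Icc s t) p

/-- `p` is `L`-locally `M`-Morse. -/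
def DLocMorseOn (σ : S → G) (M : ℝ → ℝ) (L : ℝ) (I : Set ℤ) (p : ℤ → G) : Prop :=
  ∀ s ∈ I, ∀ t ∈ I, s ≤ t → ((t - s : ℤ) : ℝ) ≤ L → DMorseOn σ M (Set.Icc s t) p

/-- The Morse local-to-global property for the Cayley graph of `(G, σ)`. -/
def CayMLTG (σ : S → G) : Prop :=
  ∀ Q : ℝ, 1 ≤ Q → ∀ M : ℝ → ℝ, IsMorseGauge M →
    ∃ (L Q' : ℝ) (M' : ℝ → ℝ), 0 < L ∧ 1 ≤ Q' ∧ IsMorseGauge M' ∧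
      ∀ I : Set ℤ, I.OrdConnected → ∀ p : ℤ → G,
        DLocMorseQGeoOn σ Q M L I p → DQGeoOn σ Q' I p ∧ DMorseOn σ M' I p

/-- The geodesic Morse local-to-global property for the Cayley graph. -/
def CayGeodesicMLTG (σ : S → G) : Prop :=
  ∀ M : ℝ → ℝ, IsMorseGauge M →
    ∃ (L : ℝ) (M' : ℝ → ℝ), 0 < L ∧ IsMorseGauge M' ∧
      ∀ I : Set ℤ, I.OrdConnected → ∀ p : ℤ → G, DGeodesicOn σ I p →
        DLocMorseOn σ M L I p → DMorseOn σ M' I p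

/-- σ-compactness of the Morse boundary of the Cayley graph. -/
def CaySigmaCompact (σ : S → G) : Prop :=
  ∃ Ms : ℕ → ℝ → ℝ, (∀ n, IsMorseGauge (Ms n)) ∧
    ∀ p : ℤ → G, DGeodesicRay σ p → ∀ M : ℝ → ℝ, IsMorseGauge M →
      DMorseOn σ M (Set.Ici 0) p → ∃ n, DMorseOn σ (Ms n) (Set.Ici 0) p

/-- Strong σ-compactness of the Morse boundary of the Cayley graph. -/
def CayStronglySigmaCompact (σ : S → G) : Prop :=
  ∃ Ms : ℕ → ℝ → ℝ, (∀ n, IsMorseGauge (Ms n)) ∧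
    (∀ p : ℤ → G, DGeodesicRay σ p → ∀ M : ℝ → ℝ, IsMorseGauge M →
      DMorseOn σ M (Set.Ici 0) p → ∃ n, DMorseOn σ (Ms n) (Set.Ici 0) p) ∧
    (∀ M : ℝ → ℝ, IsMorseGauge M → ∃ n, ∀ p : ℤ → G, DGeodesicRay σ p →
      DMorseOn σ M (Set.Ici 0) p → DMorseOn σ (Ms n) (Set.Ici 0) p)

/-- The edge path starting at `g` labelled by the word `w`. -/
def pathOfWord (σ : S → G) (g : G) (w : Word S) : ℤ → G :=
  fun n => g * evalWord σ (w.take n.toNat)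

end Cayley

/-- The canonical generating map of a presented group `⟨S | R⟩`. -/
def presGen {S : Type*} (R : Set (Word S)) : S → PresentedGroup (FreeGroup.mk '' R) :=
  fun s => PresentedGroup.of s

end MorseLTG

namespace MorseLTG

theorem aux_step {X : Type*} [MetricSpace X] {C : ℝ} {A : Set X} (hA : IsCompact A)
    (hC : ContractingSet C A) {p q x y : X} (hpq : dist q p < infDist p A)
    (hx : x ∈ projSet A p) (hy : y ∈ projSet A q) : dist x y ≤ C := by
  refine le_trans (Metric.dist_le_diam_of_mem ?_ ?_ ?_) (hC p)
  · refine hA.isBounded.subset ?_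
    intro z hz
    simp only [Set.mem_iUnion] at hz
    obtain ⟨w, _, hz⟩ := hz
    exact hz.1
  · simp only [Set.mem_iUnion]
    exact ⟨p, by simpa using lt_of_le_of_lt dist_nonneg hpq, hx⟩
  · simp only [Set.mem_iUnion]
    exact ⟨q, by simpa using hpq, hy⟩

theorem aux_proj {X : Type*} [MetricSpace X] {A : Set X} (hA : IsCompact A)
    (hne : A.Nonempty) (p : X) : ∃ x ∈ projSet A p, dist p x = infDist p A := by
  obtain ⟨x, hx, h⟩ := hA.exists_infDist_eq_dist hne p
  refine ⟨x, ⟨hx, fun z hz => ?_⟩, h.symm⟩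
  rw [← h]
  exact Metric.infDist_le_dist_of_mem hz

theorem aux_chain {X : Type*} [MetricSpace X] {C : ℝ} {A : Set X} (hA : IsCompact A)
    (hne : A.Nonempty) (hC : ContractingSet C A) {Q τ D a b : ℝ} {lam : ℝ → X}
    (hQ : 1 ≤ Q) (hτ : 0 < τ)
    (hD : Q * τ + Q < D) (hl : QGeoOn Q (Set.Icc a b) lam) (k : ℕ) :
    ∀ p q : ℝ, a ≤ p → p ≤ q → q ≤ b → q - p ≤ k * τ →
      (∀ u ∈ Set.Icc p q, D ≤ infDist (lam u) A) →
      ∀ x ∈ projSet A (lam p), ∀ y ∈ projSet A (lam q), dist x y ≤ (k + 1) * C := by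
  have hD0 : 0 < D := by nlinarith
  induction k with
  | zero =>
    intro p q hap hpq hqb hk hf x hx y hy
    have : q = p := by
      have : q - p ≤ 0 := by simpa using hk
      linarith
    subst this
    have := aux_step hA hC (p := lam q) (q := lam q)
      (by simpa using lt_of_lt_of_le hD0 (hf q ⟨le_rfl, le_rfl⟩)) hx hy
    simpa using this
  | succ k ih =>
    intro p q hap hpq hqb hk hf x hx y hy
    push_cast at hk
    have h1 : p ≤ max p (q - τ) := le_max_left _ _
    have h2 : max p (q - τ) ≤ q := max_le hpq (by linarith)
    have h3 : q - τ ≤ max p (q - τ) := le_max_right _ _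
    have h4 : max p (q - τ) - p ≤ k * τ := by
      have : max p (q - τ) ≤ p + k * τ := max_le (by nlinarith [Nat.cast_nonneg (α := ℝ) k, mul_nonneg (Nat.cast_nonneg (α := ℝ) k) hτ.le]) (by linarith)
      linarith
    generalize max p (q - τ) = r at *
    obtain ⟨z, hz, _⟩ := aux_proj hA hne (lam r)
    have e1 := ih p r hap h1 (h2.trans hqb) h4
      (fun u hu => hf u ⟨hu.1, hu.2.trans h2⟩) x hx z hz
    have e2 : dist z y ≤ C := by
      refine aux_step hA hC ?_ hz hy
      have := (hl.2 q ⟨hap.trans hpq, hqb⟩ r ⟨hap.trans h1, h2.trans hqb⟩).2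
      rw [abs_of_nonpos (by linarith)] at this
      have h5 : Q * (-(r - q)) ≤ Q * τ := mul_le_mul_of_nonneg_left (by linarith) (by linarith)
      have := hf r ⟨h1, h2⟩
      linarith
    have := dist_triangle x z y
    push_cast
    linarith

noncomputable def gD (C Q : ℝ) : ℝ := Q * (2 * Q * (C + 1)) + Q + 1

noncomputable def gM (C Q : ℝ) : ℝ :=
  Q * (2 * Q * (2 * gD C Q + 2 * C + Q)) + Q + gD C Q

theorem gM_gauge (C : ℝ) (hC : 0 ≤ C) : IsMorseGauge (gM C) := by
  refine ⟨?_, ?_, ?_⟩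
  · intro s hs t ht hst
    have hs' : (0:ℝ) ≤ s := le_trans zero_le_one hs
    have ht' : (0:ℝ) ≤ t := le_trans zero_le_one ht
    unfold gM gD
    gcongr
  · unfold gM gD
    fun_prop
  · intro t ht
    unfold gM gD
    positivity

theorem aux_main {X : Type*} [MetricSpace X] {C : ℝ} (hC0 : 0 ≤ C) {A : Set X}
    (hA : IsCompact A)
    (hC : ContractingSet C A) {Q a b : ℝ} {lam : ℝ → X}
    (hQ : 1 ≤ Q) (hl : QGeoOn Q (Set.Icc a b) lam)
    (ha : lam a ∈ A) (hb : lam b ∈ A) (u : ℝ) (hu : u ∈ Set.Icc a b) :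
    infDist (lam u) A ≤ gM C Q := by
  have hne : A.Nonempty := ⟨_, ha⟩
  have hQ0 : 0 < Q := by linarith
  have hτ : 0 < 2 * Q * (C + 1) := by positivity
  have hD : Q * (2 * Q * (C + 1)) + Q < gD C Q := by unfold gD; linarith
  have hD0 : 0 < gD C Q := by unfold gD; positivity
  set D := gD C Q with hDdef
  have hcont : ContinuousOn (fun v => infDist (lam v) A) (Set.Icc a b) :=
    (Metric.continuous_infDist_pt A).comp_continuousOn hl.1
  by_cases hle : infDist (lam u) A ≤ D
  · refine hle.trans ?_
    unfold gM
    have : 0 ≤ Q * (2 * Q * (2 * D + 2 * C + Q)) := by positivity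
    linarith
  push Not at hle
  have hca : ContinuousOn (fun v => infDist (lam v) A) (Set.Icc a u) :=
    hcont.mono (Set.Icc_subset_Icc le_rfl hu.2)
  have hcb : ContinuousOn (fun v => infDist (lam v) A) (Set.Icc u b) :=
    hcont.mono (Set.Icc_subset_Icc hu.1 le_rfl)
  have hfa : infDist (lam a) A = 0 := Metric.infDist_zero_of_mem ha
  have hfb : infDist (lam b) A = 0 := Metric.infDist_zero_of_mem hb
  obtain ⟨p, ⟨hp, hpg⟩⟩ : ∃ p, IsGreatest
      (Set.Icc a u ∩ (fun v => infDist (lam v) A) ⁻¹' Set.Iic D) p :=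
    (isCompact_Icc.of_isClosed_subset (hca.preimage_isClosed_of_isClosed isClosed_Icc isClosed_Iic)
      Set.inter_subset_left).exists_isGreatest ⟨a, ⟨le_rfl, hu.1⟩, by simp [hfa, hD0.le]⟩
  obtain ⟨q, ⟨hq, hqg⟩⟩ : ∃ p, IsLeast
      (Set.Icc u b ∩ (fun v => infDist (lam v) A) ⁻¹' Set.Iic D) p :=
    (isCompact_Icc.of_isClosed_subset (hcb.preimage_isClosed_of_isClosed isClosed_Icc isClosed_Iic)
      Set.inter_subset_left).exists_isLeast ⟨b, ⟨hu.2, le_rfl⟩, by simp [hfb, hD0.le]⟩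
  obtain ⟨⟨hap, hpu⟩, hfp⟩ := hp
  obtain ⟨⟨huq, hqb⟩, hfq⟩ := hq
  simp only [Set.mem_preimage, Set.mem_Iic] at hfp hfq
  have hfp' : infDist (lam p) A = D := by
    obtain ⟨w, hw, hwD⟩ := intermediate_value_Icc hpu (hca.mono (Set.Icc_subset_Icc hap le_rfl))
      (show D ∈ Set.Icc (infDist (lam p) A) (infDist (lam u) A) from ⟨hfp, hle.le⟩)
    have : w ≤ p := hpg ⟨⟨hap.trans hw.1, hw.2⟩, le_of_eq hwD⟩
    have : w = p := le_antisymm this hw.1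
    subst this
    exact hwD
  have hfq' : infDist (lam q) A = D := by
    obtain ⟨w, hw, hwD⟩ := intermediate_value_Icc' huq (hcb.mono (Set.Icc_subset_Icc le_rfl hqb))
      (show D ∈ Set.Icc (infDist (lam q) A) (infDist (lam u) A) from ⟨hfq, hle.le⟩)
    have : q ≤ w := hqg ⟨⟨hw.1, hw.2.trans hqb⟩, le_of_eq hwD⟩
    have : w = q := le_antisymm hw.2 this
    subst this
    exact hwD
  have hmid : ∀ v ∈ Set.Icc p q, D ≤ infDist (lam v) A := by
    intro v hv
    by_contra! hlt
    rcases le_total v u with h | h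
    · have : v ≤ p := hpg ⟨⟨hap.trans hv.1, h⟩, hlt.le⟩
      have : v = p := le_antisymm this hv.1
      subst this
      linarith
    · have : q ≤ v := hqg ⟨⟨h, hv.2.trans hqb⟩, hlt.le⟩
      have : v = q := le_antisymm hv.2 this
      subst this
      linarith
  obtain ⟨x, hx, hxd⟩ := aux_proj hA hne (lam p)
  obtain ⟨y, hy, hyd⟩ := aux_proj hA hne (lam q)
  have hpq : p ≤ q := hpu.trans huq
  have hLn : 0 ≤ (q - p) / (2 * Q * (C + 1)) := div_nonneg (by linarith) hτ.le
  have hk1 := Nat.le_ceil ((q - p) / (2 * Q * (C + 1)))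
  have hk2 := Nat.ceil_lt_add_one hLn
  have hch := aux_chain hA hne hC hQ hτ hD hl ⌈(q - p) / (2 * Q * (C + 1))⌉₊ p q hap hpq hqb
    ((div_le_iff₀ hτ).1 hk1) hmid x hx y hy
  have h1 : dist (lam p) (lam q) ≤ D + dist x y + D := by
    have := dist_triangle4 (lam p) x y (lam q)
    rw [dist_comm y] at this
    linarith
  have h2 := (hl.2 p ⟨hap, hpq.trans hqb⟩ q ⟨hap.trans hpq, hqb⟩).1
  rw [abs_of_nonneg (by linarith)] at h2
  have h3 : ((⌈(q - p) / (2 * Q * (C + 1))⌉₊ : ℝ) + 1) * C ≤ (q - p) / Q / 2 + 2 * C := by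
    have e : (q - p) / (2 * Q * (C + 1)) * (C + 1) = (q - p) / Q / 2 := by
      field_simp
    nlinarith
  have h4 : (q - p) / Q ≤ 2 * (2 * D + 2 * C + Q) := by linarith
  have h5 : q - p ≤ 2 * Q * (2 * D + 2 * C + Q) := by
    rw [div_le_iff₀ hQ0] at h4
    linarith
  have h6 := (hl.2 u hu p ⟨hap, hpq.trans hqb⟩).2
  rw [abs_of_nonpos (by linarith)] at h6
  have h7 : Q * (-(p - u)) ≤ Q * (2 * Q * (2 * D + 2 * C + Q)) :=
    mul_le_mul_of_nonneg_left (by linarith) hQ0.le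
  have h8 := Metric.infDist_le_infDist_add_dist (s := A) (x := lam u) (y := lam p)
  unfold gM
  linarith

theorem aux_morse {X : Type*} [MetricSpace X] {C : ℝ} (hC0 : 0 ≤ C) {γ : ℝ → X} {I : Set ℝ}
    (hI : I.OrdConnected) (hγ : GeodesicOn I γ)
    (h : ∀ s ∈ I, ∀ t ∈ I, s ≤ t → ContractingSet C (γ '' Set.Icc s t)) :
    MorseOn (gM C) I γ := by
  intro Q hQ s hs t ht hst lam a b hab hl ha hb u hu
  have hsub : Set.Icc s t ⊆ I := hI.out hs ht
  have hcont : ContinuousOn γ (Set.Icc s t) := by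
    have : LipschitzOnWith 1 γ (Set.Icc s t) := by
      refine LipschitzOnWith.of_dist_le_mul fun x hx y hy => ?_
      rw [hγ x (hsub hx) y (hsub hy), Real.dist_eq, abs_sub_comm]
      simp
    exact this.continuousOn
  have hA : IsCompact (γ '' Set.Icc s t) := isCompact_Icc.image_of_continuousOn hcont
  have := aux_main hC0 hA (h s hs t ht hst) hQ hl
    (ha ▸ Set.mem_image_of_mem _ ⟨le_rfl, hst⟩) (hb ▸ Set.mem_image_of_mem _ ⟨hst, le_rfl⟩) u hu
  obtain ⟨_, ⟨v, hv, rfl⟩, hd⟩ := hA.exists_infDist_eq_dist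
    (Set.Nonempty.image _ ⟨s, le_rfl, hst⟩) (lam u)
  exact ⟨v, hv, by rw [← hd]; exact this⟩

end MorseLTG

open MorseLTG in
/-- a Morse-dichotomous proper geodesic space has strongly
σ-compact Morse boundary. -/
theorem stmt11 {X : Type*} [MetricSpace X] [ProperSpace X] (hX : GeodesicSpace X)
    (x₀ : X) (c : (ℝ → ℝ) → ℝ)
    (hdich : ∀ M : ℝ → ℝ, IsMorseGauge M → 0 ≤ c M ∧
      ∀ I : Set ℝ, I.OrdConnected → ∀ γ : ℝ → X, GeodesicOn I γ → MorseOn M I γ →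
        ContractingSet (c M) (γ '' I)) :
    StronglySigmaCompactMorseBoundary x₀ := by
  have key : ∀ M : ℝ → ℝ, IsMorseGauge M → ∃ n : ℕ, ∀ γ : ℝ → X, GeodesicRayFrom x₀ γ →
      MorseOn M (Set.Ici 0) γ → MorseOn (gM (n : ℝ)) (Set.Ici 0) γ := by
    intro M hM
    obtain ⟨n, hn⟩ := exists_nat_ge (c M)
    refine ⟨n, fun γ hγ hm => aux_morse (Nat.cast_nonneg n) Set.ordConnected_Ici hγ.2 ?_⟩
    intro s hs t ht hst x
    have hsub : Set.Icc s t ⊆ Set.Ici 0 := fun v hv => le_trans hs hv.1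
    refine le_trans ((hdich M hM).2 (Set.Icc s t) Set.ordConnected_Icc γ
      (fun p hp q hq => hγ.2 p (hsub hp) q (hsub hq)) ?_ x) hn
    intro Q hQ p hp q hq
    exact hm Q hQ p (hsub hp) q (hsub hq)
  refine ⟨fun n => gM (n : ℝ), fun n => gM_gauge _ (Nat.cast_nonneg n), ?_, key⟩
  intro γ hγ M hM hm
  obtain ⟨n, hn⟩ := key M hM
  exact ⟨n, hn γ hγ hm⟩
end

section
/- Let X be a proper geodesic metric space with basepoint x₀, and let γ₁ and γ₂ be Morse geodesic rays based at x₀ which represent different points of the Morse boundary, i.e. γ₁ and γ₂ are not at bounded Hausdorff distance from one another. Then the associated horofunctions differ: there exists z ∈ X with ρ[γ₁](z) ≠ ρ[γ₂](z). -/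
open Metric Set Filter

open MorseLTG in
theorem MorseLTG.aux_close {X : Type*} [MetricSpace X] (hX : GeodesicSpace X)
    (x₀ : X) (γ₁ γ₂ : ℝ → X)
    (h₁ : GeodesicRayFrom x₀ γ₁) (h₂ : GeodesicRayFrom x₀ γ₂)
    (M : ℝ → ℝ) (hM : MorseOn M (Set.Ici 0) γ₂)
    (heq : ∀ z : X, horofn x₀ γ₁ z = horofn x₀ γ₂ z) (t : ℝ) (ht : 0 ≤ t) :
    ∃ v ∈ Set.Ici (0 : ℝ), dist (γ₁ t) (γ₂ v) ≤ M 1 := by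
  obtain ⟨h10, h1g⟩ := h₁
  obtain ⟨h20, h2g⟩ := h₂
  have hb : horofn x₀ γ₁ (γ₁ t) ≤ -t := by
    unfold horofn
    apply csInf_le
    · refine ⟨-dist x₀ (γ₁ t), ?_⟩
      rintro _ ⟨s, -, rfl⟩
      have := dist_triangle x₀ (γ₁ t) (γ₁ s)
      simp only
      linarith
    · refine ⟨t, ht, ?_⟩
      have := h1g 0 (by simp) t ht
      rw [h10, sub_zero, abs_of_nonneg ht] at this
      simp [this]
  have hlt : horofn x₀ γ₂ (γ₁ t) < -t + 1 := by rw [← heq]; linarith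
  obtain ⟨_, ⟨s, hs, rfl⟩, hs'⟩ := exists_lt_of_csInf_lt (by simp) hlt
  have hs0 : (0 : ℝ) ≤ s := hs
  have hd := h2g 0 (by simp) s hs
  rw [h20, sub_zero, abs_of_nonneg hs0] at hd
  simp only [hd] at hs'
  obtain ⟨σ, hσ0, hσ1, hσ⟩ := hX (γ₁ t) (γ₂ s)
  set D := dist (γ₁ t) (γ₂ s) with hD
  have hD0 : 0 ≤ D := dist_nonneg
  let lam : ℝ → X := fun u => if u ≤ t then γ₁ u else σ (u - t)
  have hl1 : ∀ u, u ≤ t → lam u = γ₁ u := fun u hu => if_pos hu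
  have hl2 : ∀ u, t ≤ u → lam u = σ (u - t) := by
    intro u hu
    rcases hu.eq_or_lt with rfl | h
    · rw [hl1 _ le_rfl, sub_self, hσ0]
    · exact if_neg (not_le.2 h)
  have key : ∀ u v, 0 ≤ u → u ≤ v → v ≤ t + D → dist (lam u) (lam v) ≤ v - u := by
    intro u v hu huv hv
    rcases le_total v t with hvt | hvt
    · rw [hl1 u (by linarith), hl1 v hvt, h1g u hu v (by simp; linarith),
        abs_of_nonneg (by linarith)]
    · have e2 : ∀ w, t ≤ w → w ≤ v → dist (lam w) (lam v) ≤ v - w := by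
        intro w hw hwv
        rw [hl2 w hw, hl2 v hvt, hσ (w - t) ⟨by linarith, by linarith⟩ (v - t)
          ⟨by linarith, by linarith⟩, abs_of_nonneg (by linarith)]
        linarith
      rcases le_total u t with hut | hut
      · have a := e2 t le_rfl hvt
        have b : dist (lam u) (lam t) = t - u := by
          rw [hl1 u hut, hl1 t le_rfl, h1g u hu t ht, abs_of_nonneg (by linarith)]
        have := dist_triangle (lam u) (lam t) (lam v)
        linarith
      · exact e2 u hut huv
  have hl0 : lam 0 = γ₂ 0 := by rw [hl1 0 ht, h10, h20]
  have hlD : lam (t + D) = γ₂ s := by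
    rw [hl2 _ (by linarith), add_sub_cancel_left, hσ1]
  have low : ∀ u v, 0 ≤ u → u ≤ v → v ≤ t + D → v - u - 1 ≤ dist (lam u) (lam v) := by
    intro u v hu huv hv
    have a := key 0 u le_rfl hu (by linarith)
    have b := key v (t + D) (by linarith) hv le_rfl
    have c := dist_triangle4 (lam 0) (lam u) (lam v) (lam (t + D))
    have e : dist (lam 0) (lam (t + D)) = s := by rw [hl0, hlD, h20, hd]
    linarith
  have keyabs : ∀ u ∈ Set.Icc 0 (t + D), ∀ v ∈ Set.Icc 0 (t + D),
      |v - u| - 1 ≤ dist (lam u) (lam v) ∧ dist (lam u) (lam v) ≤ |v - u| := by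
    intro u hu v hv
    rcases le_total u v with h | h
    · rw [abs_of_nonneg (by linarith)]
      exact ⟨low u v hu.1 h hv.2, key u v hu.1 h hv.2⟩
    · rw [abs_of_nonpos (by linarith), dist_comm, neg_sub]
      exact ⟨low v u hv.1 h hu.2, key v u hv.1 h hu.2⟩
  have hq : QGeoOn 1 (Set.Icc 0 (t + D)) lam := by
    constructor
    · have : LipschitzOnWith 1 lam (Set.Icc 0 (t + D)) := by
        apply LipschitzOnWith.of_dist_le_mul
        intro u hu v hv
        rw [NNReal.coe_one, one_mul, dist_comm u v, Real.dist_eq]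
        exact (keyabs u hu v hv).2
      exact this.continuousOn
    · intro u hu v hv
      have := keyabs u hu v hv
      constructor <;> linarith [this.1, this.2]
  obtain ⟨v, hv, hv'⟩ := hM 1 le_rfl 0 (by simp) s hs hs0 lam 0 (t + D) (by linarith) hq hl0 hlD t
    ⟨ht, by linarith⟩
  rw [hl1 t le_rfl] at hv'
  exact ⟨v, hv.1, hv'⟩

open MorseLTG in
/-- two Morse geodesic rays representing different points of the
Morse boundary have different horofunctions. -/
theorem stmt13 {X : Type*} [MetricSpace X] [ProperSpace X] (hX : GeodesicSpace X)
    (x₀ : X) (γ₁ γ₂ : ℝ → X)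
    (h₁ : GeodesicRayFrom x₀ γ₁) (h₂ : GeodesicRayFrom x₀ γ₂)
    (hm₁ : ∃ M : ℝ → ℝ, IsMorseGauge M ∧ MorseOn M (Set.Ici 0) γ₁)
    (hm₂ : ∃ M : ℝ → ℝ, IsMorseGauge M ∧ MorseOn M (Set.Ici 0) γ₂)
    (hdiff : ¬ ∃ K : ℝ,
      (∀ s ∈ Set.Ici (0 : ℝ), ∃ t ∈ Set.Ici (0 : ℝ), dist (γ₁ s) (γ₂ t) ≤ K) ∧
      (∀ t ∈ Set.Ici (0 : ℝ), ∃ s ∈ Set.Ici (0 : ℝ), dist (γ₁ s) (γ₂ t) ≤ K)) :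
    ∃ z : X, horofn x₀ γ₁ z ≠ horofn x₀ γ₂ z := by
  by_contra hcon
  push Not at hcon
  obtain ⟨M₁, -, hM₁⟩ := hm₁
  obtain ⟨M₂, -, hM₂⟩ := hm₂
  refine hdiff ⟨max (M₁ 1) (M₂ 1), ?_, ?_⟩
  · intro s hs
    obtain ⟨v, hv, h⟩ := aux_close hX x₀ γ₁ γ₂ h₁ h₂ M₂ hM₂ hcon s hs
    exact ⟨v, hv, h.trans (le_max_right _ _)⟩
  · intro s hs
    obtain ⟨v, hv, h⟩ := aux_close hX x₀ γ₂ γ₁ h₂ h₁ M₁ hM₁ (fun z => (hcon z).symm) s hs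
    exact ⟨v, hv, by rw [dist_comm]; exact h.trans (le_max_left _ _)⟩
end
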